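/- arXiv:1802.08309 — 3 statements merged into one kernel-verified Lean document; each statement's English description precedes it below -/
import Mathlib

section
/- Let ℬ ⊆ ℕ = {1,2,…} be a primitive set and for N ∈ ℕ let ℬ̃^(N) := {b ∈ ℬ : b has no prime factor ≤ N}. Then ℬ is Behrend if and only if ℬ̃^(N) is Behrend for every N ∈ ℕ. -/
open Filter Set Topology MeasureTheory

open scoped Classical

noncomputable section

/-- The set of multiples `M_B ⊆ ℤ` of a set `B ⊆ ℕ`. -/
def multiplesZ (B : Set ℕ) : Set ℤ := {n : ℤ | ∃ b ∈ B, (b : ℤ) ∣ n}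

/-- The `B`-free integers `F_B = ℤ ∖ M_B`. -/
def freeZ (B : Set ℕ) : Set ℤ := (multiplesZ B)ᶜ

/-- The logarithmically weighted averages `(1/log n) ∑_{k=1}^n 1_A(k)/k`. -/
def logWeight (A : Set ℤ) (n : ℕ) : ℝ :=
  (Real.log n)⁻¹ * ∑ k ∈ Finset.Icc 1 n, A.indicator (fun m : ℤ => ((m : ℝ))⁻¹) (k : ℤ)

/-- The lower logarithmic density of a set `A ⊆ ℤ`. -/
def logDensLow (A : Set ℤ) : ℝ := liminf (logWeight A) atTop

/-- `A ⊆ ℤ` has logarithmic density `d`. -/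
def HasLogDensity (A : Set ℤ) (d : ℝ) : Prop := Tendsto (logWeight A) atTop (𝓝 d)

/-- `B` is primitive: no element divides another one. -/
def Primitive (B : Set ℕ) : Prop := ∀ b ∈ B, ∀ b' ∈ B, b ∣ b' → b = b'

/-- `B` is Behrend: its set of multiples has logarithmic density one. -/
def IsBehrend (B : Set ℕ) : Prop := logDensLow (multiplesZ B) = 1

/-- `B` is taut: removing any element strictly decreases the logarithmic density
of the set of multiples. -/
def IsTaut (B : Set ℕ) : Prop :=
  ∀ b ∈ B, logDensLow (multiplesZ (B \ {b})) < logDensLow (multiplesZ B)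

/-- `B̃^(N)`: the elements of `B` having no prime factor `≤ N`. -/
def Btilde (B : Set ℕ) (N : ℕ) : Set ℕ := {b ∈ B | ∀ p : ℕ, p.Prime → p ∣ b → N < p}

/-- `B^(N)`: the elements of `B` all of whose prime factors are `≤ N`. -/
def Bsmooth (B : Set ℕ) (N : ℕ) : Set ℕ := {b ∈ B | ∀ p : ℕ, p.Prime → p ∣ b → p ≤ N}

/-!
Every `k ≥ 1` factors as `k = s * m`, where `s` has all its prime factors in a given finite set `T`
of primes and `m` has none of them there. Let `B'` consist of the `b ∈ B` without prime factors in
`T`. If `k` is `B'`-free then `m` is `B`-free, because a divisor `b ∈ B` of `m` has no prime factor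
in `T` and so lies in `B'`. Summing `1 / k = (1 / s) * (1 / m)` shows that the logarithmic averages
of the `B'`-free numbers are at most those of the `B`-free numbers times the constant `∑ 1 / s`,
which is finite by the Euler product over `T`. The reverse bound, with
constant `1`, is clear from `B' ⊆ B`; for `B̃^(N)` take `T` to be the primes up to `N`.
-/

open scoped Pointwise

lemma summable_inv_factoredNumbers (T : Finset ℕ) :
    Summable fun s : Nat.factoredNumbers T => ((s : ℕ) : ℝ)⁻¹ := by
  let f : ℕ →* ℝ := invMonoidHom.comp (Nat.castRingHom ℝ).toMonoidHom
  have norm_f_lt_one {p : ℕ} (hp : p.Prime) : ‖f p‖ < 1 := by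
    simpa [f] using inv_lt_one_of_one_lt₀ (Nat.one_lt_cast.mpr hp.one_lt)
  exact (EulerProduct.summable_and_hasSum_factoredNumbers_prod_filter_prime_geometric
    norm_f_lt_one T).1.of_norm

lemma exists_factoredNumbers_mul_eq (T : Finset ℕ) {k : ℕ} (hk : k ≠ 0) :
    ∃ s ∈ Nat.factoredNumbers T, ∃ m, (∀ p ∈ T, p.Prime → ¬ p ∣ m) ∧ s * m = k := by
  induction k using induction_on_primes with
  | zero => exact absurd rfl hk
  | one => exact ⟨1, by simp [Nat.mem_factoredNumbers], 1, fun p _ hp => hp.not_dvd_one, rfl⟩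
  | prime_mul p k hp ih =>
    obtain ⟨s, hs, m, hm, rfl⟩ := ih (right_ne_zero_of_mul hk)
    by_cases hpT : p ∈ T
    · have hpT' : p ∈ Nat.factoredNumbers T := by
        simpa [Nat.mem_factoredNumbers, Nat.primeFactorsList_prime hp, hp.ne_zero] using hpT
      exact ⟨p * s, Nat.mul_mem_factoredNumbers hpT' hs, m, hm, mul_assoc p s m⟩
    · refine ⟨s, hs, p * m, fun q hqT hq hqpm => ?_, mul_left_comm s p m⟩
      rcases hq.dvd_mul.mp hqpm with hqp | hqm
      · exact hpT ((Nat.prime_dvd_prime_iff_eq hq hp).mp hqp ▸ hqT)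
      · exact hm q hqT hq hqm

lemma sum_inv_le_of_subset_mul {K S M : Finset ℕ} (h : K ⊆ S * M) :
    ∑ k ∈ K, (k : ℝ)⁻¹ ≤ (∑ s ∈ S, (s : ℝ)⁻¹) * ∑ m ∈ M, (m : ℝ)⁻¹ :=
  calc ∑ k ∈ K, (k : ℝ)⁻¹
      ≤ ∑ k ∈ S * M, (k : ℝ)⁻¹ :=
        Finset.sum_le_sum_of_subset_of_nonneg h fun _ _ _ => by positivity
    _ ≤ ∑ q ∈ S ×ˢ M, ((q.1 * q.2 : ℕ) : ℝ)⁻¹ :=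
        Finset.sum_image_le_of_nonneg fun _ _ => by positivity
    _ = (∑ s ∈ S, (s : ℝ)⁻¹) * ∑ m ∈ M, (m : ℝ)⁻¹ := by
        simp only [Nat.cast_mul, mul_inv, Finset.sum_mul_sum, Finset.sum_product]

lemma logWeight_eq_sum_filter (A : Set ℤ) (n : ℕ) :
    logWeight A n = (Real.log n)⁻¹ * ∑ k ∈ Finset.Icc 1 n with ((k : ℕ) : ℤ) ∈ A, (k : ℝ)⁻¹ := by
  simp [logWeight, Finset.sum_filter, indicator_apply]

lemma logWeight_nonneg (A : Set ℤ) (n : ℕ) : 0 ≤ logWeight A n := by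
  rw [logWeight_eq_sum_filter]
  positivity

lemma logWeight_mono {A A' : Set ℤ} (h : A ⊆ A') (n : ℕ) : logWeight A n ≤ logWeight A' n := by
  simp only [logWeight_eq_sum_filter]
  gcongr

lemma logWeight_add_compl (A : Set ℤ) (n : ℕ) :
    logWeight A n + logWeight Aᶜ n = logWeight univ n := by
  simp only [logWeight, ← mul_add, ← Finset.sum_add_distrib, indicator_self_add_compl_apply,
    indicator_univ]

lemma logWeight_le_tsum_mul {A A' : Set ℤ} {S : Set ℕ} (hS : Summable fun s : S => (s : ℝ)⁻¹)
    (hA : ∀ k : ℕ, k ≠ 0 → (k : ℤ) ∈ A → ∃ s ∈ S, ∃ m : ℕ, (m : ℤ) ∈ A' ∧ s * m = k) (n : ℕ) :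
    logWeight A n ≤ (∑' s : S, (s : ℝ)⁻¹) * logWeight A' n := by
  have filter_subset : {k ∈ Finset.Icc 1 n | ((k : ℕ) : ℤ) ∈ A} ⊆
      {s ∈ Finset.Icc 1 n | s ∈ S} * {m ∈ Finset.Icc 1 n | ((m : ℕ) : ℤ) ∈ A'} := by
    intro k hk
    simp only [Finset.mem_filter, Finset.mem_Icc] at hk
    obtain ⟨⟨hk1, hkn⟩, hkA⟩ := hk
    obtain ⟨s, hs, m, hm, rfl⟩ := hA k (Nat.ne_zero_of_lt hk1) hkA
    have hs0 : 0 < s := Nat.pos_of_mul_pos_right hk1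
    have hm0 : 0 < m := Nat.pos_of_mul_pos_left hk1
    refine Finset.mul_mem_mul ?_ ?_ <;> simp only [Finset.mem_filter, Finset.mem_Icc]
    · exact ⟨⟨hs0, (Nat.le_mul_of_pos_right s hm0).trans hkn⟩, hs⟩
    · exact ⟨⟨hm0, (Nat.le_mul_of_pos_left m hs0).trans hkn⟩, hm⟩
  have sum_le_tsum : ∑ s ∈ Finset.Icc 1 n with s ∈ S, (s : ℝ)⁻¹ ≤ ∑' s : S, (s : ℝ)⁻¹ := by
    rw [← Finset.sum_subtype_of_mem (p := (· ∈ S)) (fun s : ℕ => (s : ℝ)⁻¹)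
      fun s hs => (Finset.mem_filter.mp hs).2]
    exact hS.sum_le_tsum _ fun s _ => by positivity
  rw [logWeight_eq_sum_filter, logWeight_eq_sum_filter, mul_left_comm]
  gcongr
  exact (sum_inv_le_of_subset_mul filter_subset).trans (by gcongr)

lemma hasLogDensity_univ : HasLogDensity univ 1 := by
  have tendsto_log : Tendsto (fun n : ℕ => Real.log n) atTop atTop :=
    Real.tendsto_log_atTop.comp tendsto_natCast_atTop_atTop
  have tendsto_harmonic_div_log :
      Tendsto (fun n : ℕ => (Real.log n)⁻¹ * (harmonic n - Real.log n) + 1) atTop (𝓝 1) := by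
    simpa using (tendsto_log.inv_tendsto_atTop.mul Real.tendsto_harmonic_sub_log).add_const 1
  refine tendsto_harmonic_div_log.congr' ?_
  filter_upwards [tendsto_log.eventually_ne_atTop 0] with n hn
  simp [logWeight, harmonic_eq_sum_Icc, mul_sub, inv_mul_cancel₀ hn]

lemma HasLogDensity.compl {A : Set ℤ} {d : ℝ} (h : HasLogDensity A d) :
    HasLogDensity Aᶜ (1 - d) :=
  (hasLogDensity_univ.sub h).congr fun n => by simp [← logWeight_add_compl A n]

lemma logDensLow_eq_one_iff {A : Set ℤ} : logDensLow A = 1 ↔ HasLogDensity A 1 := by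
  refine ⟨fun h => ?_, Tendsto.liminf_eq⟩
  have le_univ : ∀ᶠ n in atTop, logWeight A n ≤ logWeight univ n :=
    Eventually.of_forall (logWeight_mono (subset_univ A))
  have bdd_below : IsBoundedUnder (· ≥ ·) atTop (logWeight A) :=
    isBoundedUnder_of ⟨0, logWeight_nonneg A⟩
  have bdd_above_univ := hasLogDensity_univ.isBoundedUnder_le
  have limsup_le_one : limsup (logWeight A) atTop ≤ 1 :=
    (limsup_le_limsup le_univ bdd_below.isCoboundedUnder_le bdd_above_univ).trans_eq
      hasLogDensity_univ.limsup_eq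
  exact tendsto_of_le_liminf_of_limsup_le h.ge limsup_le_one
    (bdd_above_univ.mono_le le_univ) bdd_below

lemma isBehrend_iff_hasLogDensity_freeZ {B : Set ℕ} :
    IsBehrend B ↔ HasLogDensity (freeZ B) 0 := by
  rw [IsBehrend, logDensLow_eq_one_iff, freeZ]
  exact ⟨fun h => by simpa using h.compl, fun h => by simpa using h.compl⟩

lemma freeZ_anti {B B' : Set ℕ} (h : B ⊆ B') : freeZ B' ⊆ freeZ B :=
  compl_subset_compl.mpr fun _ ⟨b, hb, hbn⟩ => ⟨b, h hb, hbn⟩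

lemma IsBehrend.mono {B B' : Set ℕ} (h : B ⊆ B') (hB : IsBehrend B) : IsBehrend B' := by
  rw [isBehrend_iff_hasLogDensity_freeZ] at hB ⊢
  exact squeeze_zero (logWeight_nonneg _) (logWeight_mono (freeZ_anti h)) hB

lemma exists_factoredNumbers_mul_freeZ_eq {B : Set ℕ} (T : Finset ℕ) {k : ℕ} (hk : k ≠ 0)
    (hkB : (k : ℤ) ∈ freeZ {b ∈ B | ∀ p ∈ T, p.Prime → ¬ p ∣ b}) :
    ∃ s ∈ Nat.factoredNumbers T, ∃ m : ℕ, (m : ℤ) ∈ freeZ B ∧ s * m = k := by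
  obtain ⟨s, hs, m, hm, rfl⟩ := exists_factoredNumbers_mul_eq T hk
  refine ⟨s, hs, m, fun ⟨b, hb, hbm⟩ => hkB ⟨b, ⟨hb, fun p hpT hp hpb => ?_⟩, ?_⟩, rfl⟩
  · exact hm p hpT hp (hpb.trans (Int.natCast_dvd_natCast.mp hbm))
  · exact_mod_cast hbm.mul_left s

lemma IsBehrend.sep_forall_prime_not_dvd {B : Set ℕ} (hB : IsBehrend B) (T : Finset ℕ) :
    IsBehrend {b ∈ B | ∀ p ∈ T, p.Prime → ¬ p ∣ b} := by
  rw [isBehrend_iff_hasLogDensity_freeZ] at hB ⊢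
  refine squeeze_zero (logWeight_nonneg _) (logWeight_le_tsum_mul (summable_inv_factoredNumbers T)
    fun k => exists_factoredNumbers_mul_freeZ_eq T) ?_
  simpa using hB.const_mul _

theorem behrend_iff_forall_btilde_behrend_general (B : Set ℕ) (T : Finset ℕ) :
    IsBehrend B ↔ IsBehrend {b ∈ B | ∀ p ∈ T, p.Prime → ¬ p ∣ b} :=
  ⟨fun h => h.sep_forall_prime_not_dvd T, IsBehrend.mono (sep_subset _ _)⟩

lemma btilde_eq_sep_forall_prime_not_dvd (B : Set ℕ) (N : ℕ) :
    Btilde B N = {b ∈ B | ∀ p ∈ Finset.Iic N, p.Prime → ¬ p ∣ b} := by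
  ext b
  simp only [Btilde, mem_ofPred_eq, Finset.mem_Iic, ← not_le]
  grind

/-- A primitive set `B` is Behrend if and only if `B̃^(N)` is Behrend for every `N`. -/
theorem behrend_iff_forall_btilde_behrend (B : Set ℕ) (hB0 : 0 ∉ B) (hprim : Primitive B) :
    IsBehrend B ↔ ∀ N : ℕ, IsBehrend (Btilde B N) := by
  simp only [btilde_eq_sep_forall_prime_not_dvd, ← behrend_iff_forall_btilde_behrend_general,
    forall_const]
end
end

section
/- Let ℬ ⊆ ℕ be a primitive set, H the closure of the image of the diagonal embedding Δ : ℤ → ∏_{b∈ℬ} ℤ/bℤ with normalized Haar measure m_H, and for N ∈ ℕ let W_{ℬ̃^(N)} := {h ∈ H : h_b ≠ 0 for all b ∈ ℬ with no prime factor ≤ N}. Then the set W_∞ := ⋃_{N∈ℕ} W_{ℬ̃^(N)} satisfies m_H(W_∞) ∈ {0,1}. -/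
open Filter Set Topology MeasureTheory

open scoped Classical

noncomputable section

/-- The diagonal embedding `Δ : ℤ → ∏_{b ∈ B} ℤ/bℤ`. -/
def diagEmb (B : Set ℕ) : ℤ →+ ((b : B) → ZMod b) where
  toFun n := fun b => (n : ZMod b)
  map_zero' := by ext b; simp
  map_add' m n := by ext b; simp [Int.cast_add]

/-- `H`, the topological closure of `Δ(ℤ)`, as a (closed) subgroup of `∏_{b ∈ B} ℤ/bℤ`. -/
def Hgrp (B : Set ℕ) : AddSubgroup ((b : B) → ZMod b) :=
  (diagEmb B).range.topologicalClosure

instance (B : Set ℕ) [∀ b : B, NeZero (b : ℕ)] : CompactSpace (Hgrp B) :=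
  isCompact_iff_compactSpace.mp ((AddSubgroup.isClosed_topologicalClosure _).isCompact)

instance (B : Set ℕ) : MeasurableSpace (Hgrp B) := borel _

instance (B : Set ℕ) : BorelSpace (Hgrp B) := ⟨rfl⟩

/-- The normalized Haar measure `m_H` on the compact abelian group `H`. -/
def mH (B : Set ℕ) [∀ b : B, NeZero (b : ℕ)] : Measure (Hgrp B) :=
  Measure.addHaarMeasure ⊤

/-- The window `W_{B'} ⊆ H` determined by a subset `B' ⊆ B`. -/
def Wset (B : Set ℕ) (B' : Set ℕ) : Set (Hgrp B) :=
  {h | ∀ b : B, (b : ℕ) ∈ B' → (h : (b : B) → ZMod b) b ≠ 0}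

/-!
Call `g ∈ H` a tail element if `g` vanishes on `B̃^(N)` for all large `N`. Translation by a tail
element does not change `h ∈ H` on `B̃^(N)` for large `N`, hence preserves `W_∞`. Every `b ≤ N` is
coprime to every element of `B̃^(N)`, so by the Chinese remainder theorem and compactness each
`x ∈ H` agrees on `B ∩ [1, N]` with some `g ∈ H` vanishing on `B̃^(N)`. Thus the tail elements are
dense, and the ergodicity of the translation action of `H` on itself forces `W_∞` to be null or
conull.
-/

open scoped Pointwise

section ZeroOneLaw

variable {G X : Type*} [TopologicalSpace G] [AddGroup G] [TopologicalSpace X] [R1Space X]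
  [MeasurableSpace X] [BorelSpace X] [AddAction G X] [ContinuousVAdd G X]
  {μ : Measure X} [IsProbabilityMeasure μ] [μ.InnerRegular] [ErgodicVAdd G X μ] {s : Set X}

lemma measure_eq_zero_or_one_of_dense_stabilizer (hs : NullMeasurableSet s μ)
    (hd : Dense (AddAction.stabilizer G s : Set G)) : μ s = 0 ∨ μ s = 1 := by
  have hconst : EventuallyConst s (ae μ) :=
    aeconst_of_dense_setOfPred_preimage_vadd_eq hs <|
      hd.mono fun _ hg => Set.ext (AddAction.mem_stabilizer_set.1 hg)
  refine (eventuallyConst_set'.1 hconst).imp (fun h => ?_) (fun h => ?_)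
  · rw [measure_congr h, measure_empty]
  · rw [measure_congr h, measure_univ]

end ZeroOneLaw

lemma exists_dvd_sub_and_dvd_of_isCoprime {R : Type*} [CommRing R] {a z : R}
    (h : IsCoprime a z) (n : R) : ∃ m, a ∣ m - n ∧ z ∣ m := by
  obtain ⟨u, v, huv⟩ := h
  exact ⟨n * v * z, ⟨-(n * u), by linear_combination n * huv⟩, Dvd.intro_left _ rfl⟩

variable {B : Set ℕ}

section Hgrp

lemma continuous_Hgrp_apply (b : B) : Continuous fun h : Hgrp B => h.1 b :=
  (continuous_apply b).comp continuous_subtype_val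

instance : SecondCountableTopology (Hgrp B) :=
  have (b : B) : Countable (ZMod b) := ZMod.intCast_surjective.countable
  TopologicalSpace.Subtype.secondCountableTopology _

lemma exists_intCast_eq_Hgrp_apply (h : Hgrp B) (F : Finset B) :
    ∃ n : ℤ, ∀ b ∈ F, (n : ZMod b) = h.1 b := by
  have hopen : IsOpen ((F : Set B).pi fun b => {h.1 b}) :=
    isOpen_set_pi F.finite_toSet fun b _ => isOpen_discrete _
  obtain ⟨_, hmem, n, rfl⟩ := mem_closure_iff.1 h.2 _ hopen fun b _ => rfl
  exact ⟨n, hmem⟩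

variable [∀ b : B, NeZero (b : ℕ)]

lemma exists_Hgrp_apply_mem_of_finset {C : ∀ b : B, Set (ZMod b)}
    (hC : ∀ F : Finset B, ∃ n : ℤ, ∀ b ∈ F, (n : ZMod b) ∈ C b) :
    ∃ h : Hgrp B, ∀ b, h.1 b ∈ C b := by
  have hclosed (b : B) : IsClosed {h : Hgrp B | h.1 b ∈ C b} :=
    (isClosed_discrete (C b)).preimage (continuous_Hgrp_apply b)
  obtain ⟨h, -, hh⟩ := isCompact_univ.inter_iInter_nonempty _ hclosed fun F => by
    obtain ⟨n, hn⟩ := hC F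
    exact ⟨⟨diagEmb B n, subset_closure ⟨n, rfl⟩⟩, trivial, mem_iInter₂.2 hn⟩
  exact ⟨h, mem_iInter.1 hh⟩

lemma exists_Hgrp_apply_eq_and_eq_zero {A Z : Set B}
    (hAZ : ∀ a ∈ A, ∀ z ∈ Z, (a : ℕ).Coprime z) (x : Hgrp B) :
    ∃ h : Hgrp B, (∀ a ∈ A, h.1 a = x.1 a) ∧ ∀ z ∈ Z, h.1 z = 0 := by
  have hfinite (F : Finset B) : ∃ m : ℤ, ∀ b ∈ F,
      (b ∈ A → (m : ZMod b) = x.1 b) ∧ (b ∈ Z → (m : ZMod b) = 0) := by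
    obtain ⟨n, hn⟩ := exists_intCast_eq_Hgrp_apply x F
    have hcoprime : IsCoprime (∏ a ∈ F with a ∈ A, (a : ℤ)) (∏ z ∈ F with z ∈ Z, (z : ℤ)) :=
      .prod_left fun a ha => .prod_right fun z hz =>
        (hAZ a (Finset.mem_filter.1 ha).2 z (Finset.mem_filter.1 hz).2).isCoprime
    obtain ⟨m, hmA, hmZ⟩ := exists_dvd_sub_and_dvd_of_isCoprime hcoprime n
    refine ⟨m, fun b hb => ⟨fun hbA => ?_, fun hbZ => ?_⟩⟩
    · rw [← hn b hb, eq_comm, ZMod.intCast_eq_intCast_iff_dvd_sub]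
      exact (Finset.dvd_prod_of_mem _ (Finset.mem_filter.2 ⟨hb, hbA⟩)).trans hmA
    · rw [ZMod.intCast_zmod_eq_zero_iff_dvd]
      exact (Finset.dvd_prod_of_mem _ (Finset.mem_filter.2 ⟨hb, hbZ⟩)).trans hmZ
  obtain ⟨h, hh⟩ := exists_Hgrp_apply_mem_of_finset
    (C := fun b => {y | (b ∈ A → y = x.1 b) ∧ (b ∈ Z → y = 0)}) hfinite
  exact ⟨h, fun a => (hh a).1, fun z => (hh z).2⟩

end Hgrp

section Btilde

variable (B) in
lemma Btilde_antitone : Antitone (Btilde B) :=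
  fun _ _ hMN _ hb => ⟨hb.1, fun p hp hpb => hMN.trans_lt (hb.2 p hp hpb)⟩

lemma coprime_of_le_of_mem_Btilde {N a b : ℕ} (ha₀ : a ≠ 0) (ha : a ≤ N) (hb : b ∈ Btilde B N) :
    a.Coprime b :=
  Nat.coprime_of_dvd fun p hp hpa hpb =>
    ((Nat.le_of_dvd (Nat.pos_of_ne_zero ha₀) hpa).trans ha).not_gt (hb.2 p hp hpb)

end Btilde

section Wset

lemma isClosed_Wset (B' : Set ℕ) : IsClosed (Wset B B') := by
  simp only [Wset, ofPred_forall]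
  exact isClosed_iInter fun b => isClosed_iInter fun _ =>
    (isClosed_discrete {0}ᶜ).preimage (continuous_Hgrp_apply b)

variable (B) in
lemma Wset_antitone : Antitone (Wset B) :=
  fun _ _ hsub _ hh b hb => hh b (hsub hb)

lemma mem_iUnion_Wset_Btilde_iff {h : Hgrp B} :
    h ∈ ⋃ N, Wset B (Btilde B N) ↔ ∀ᶠ N in atTop, h ∈ Wset B (Btilde B N) := by
  rw [mem_iUnion, eventually_atTop]
  exact exists_congr fun M =>
    ⟨fun hM N hMN => Wset_antitone B (Btilde_antitone B hMN) hM, fun hM => hM M le_rfl⟩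

end Wset

section tailSubgroup

variable (B) in
/-- The subgroup of tail elements of `H`: those vanishing on `B̃^(N)` for all large `N`. As the sets
`B̃^(N)` decrease, this is the union over `N` of the subgroups of elements vanishing on `B̃^(N)`. -/
def tailSubgroup : AddSubgroup (Hgrp B) where
  carrier := {g | ∀ᶠ N in atTop, ∀ b : B, (b : ℕ) ∈ Btilde B N → g.1 b = 0}
  zero_mem' := .of_forall fun _ _ _ => rfl
  add_mem' hg hh := by
    filter_upwards [hg, hh] with N hgN hhN b hb
    simp [hgN b hb, hhN b hb]
  neg_mem' hg := by
    filter_upwards [hg] with N hgN b hb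
    simp [hgN b hb]

lemma mem_tailSubgroup_of_forall_mem_Btilde {g : Hgrp B} {N : ℕ}
    (hg : ∀ b : B, (b : ℕ) ∈ Btilde B N → g.1 b = 0) : g ∈ tailSubgroup B :=
  (eventually_ge_atTop N).mono fun _ hNM b hb => hg b (Btilde_antitone B hNM hb)

lemma tailSubgroup_le_stabilizer_iUnion_Wset :
    tailSubgroup B ≤ AddAction.stabilizer (Hgrp B) (⋃ N, Wset B (Btilde B N)) := by
  intro g hg
  refine AddAction.mem_stabilizer_set.2 fun h => ?_
  rw [mem_iUnion_Wset_Btilde_iff, mem_iUnion_Wset_Btilde_iff]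
  refine eventually_congr (hg.mono fun N hgN => forall₂_congr fun b hb => ?_)
  simp [hgN b hb]

lemma dense_tailSubgroup [∀ b : B, NeZero (b : ℕ)] : Dense (tailSubgroup B : Set (Hgrp B)) := by
  intro x
  have happrox (N : ℕ) : ∃ g : Hgrp B, (∀ b : B, (b : ℕ) ≤ N → g.1 b = x.1 b) ∧
      ∀ b : B, (b : ℕ) ∈ Btilde B N → g.1 b = 0 :=
    exists_Hgrp_apply_eq_and_eq_zero (A := {b | (b : ℕ) ≤ N}) (Z := {b | (b : ℕ) ∈ Btilde B N})
      (fun a ha _ hz => coprime_of_le_of_mem_Btilde (NeZero.ne (a : ℕ)) ha hz) x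
  choose g hgx hg₀ using happrox
  have hlim : Tendsto g atTop (𝓝 x) := by
    refine tendsto_subtype_rng.2 (tendsto_pi_nhds.2 fun b => ?_)
    exact tendsto_const_nhds.congr' <|
      (eventually_ge_atTop (b : ℕ)).mono fun N hN => (hgx N b hN).symm
  exact mem_closure_of_tendsto hlim <|
    .of_forall fun N => mem_tailSubgroup_of_forall_mem_Btilde (hg₀ N)

end tailSubgroup

section mH

variable [∀ b : B, NeZero (b : ℕ)]

instance : (mH B).IsAddHaarMeasure :=
  inferInstanceAs (Measure.addHaarMeasure ⊤).IsAddHaarMeasure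

instance : IsProbabilityMeasure (mH B) :=
  ⟨Measure.addHaarMeasure_self (K₀ := ⊤)⟩

lemma mH_eq_zero_or_one_of_tailSubgroup_le_stabilizer {s : Set (Hgrp B)}
    (hs : NullMeasurableSet s (mH B)) (hinv : tailSubgroup B ≤ AddAction.stabilizer (Hgrp B) s) :
    mH B s = 0 ∨ mH B s = 1 :=
  measure_eq_zero_or_one_of_dense_stabilizer hs (dense_tailSubgroup.mono hinv)

end mH

theorem haar_Winfty_zero_or_one_general (B : Set ℕ) [∀ b : B, NeZero (b : ℕ)] :
    mH B (⋃ N : ℕ, Wset B (Btilde B N)) = 0 ∨ mH B (⋃ N : ℕ, Wset B (Btilde B N)) = 1 :=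
  have hmeas : MeasurableSet (⋃ N : ℕ, Wset B (Btilde B N)) :=
    .iUnion fun N => (isClosed_Wset (Btilde B N)).measurableSet
  mH_eq_zero_or_one_of_tailSubgroup_le_stabilizer hmeas.nullMeasurableSet
    tailSubgroup_le_stabilizer_iUnion_Wset

/-- Zero-one law: the union `W_∞ = ⋃_N W_{B̃^(N)}` has Haar measure `0` or `1`. -/
theorem haar_Winfty_zero_or_one (B : Set ℕ) [∀ b : B, NeZero (b : ℕ)] (hprim : Primitive B) :
    mH B (⋃ N : ℕ, Wset B (Btilde B N)) = 0 ∨ mH B (⋃ N : ℕ, Wset B (Btilde B N)) = 1 :=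
  haar_Winfty_zero_or_one_general B
end
end

section
/- Let ℬ ⊆ ℕ, let H be the closure of the image of the diagonal embedding Δ : ℤ → ∏_{b∈ℬ} ℤ/bℤ with normalized Haar measure m_H, let ℬ' ⊆ ℬ be finite, and let (r_b)_{b∈ℬ'} with r_b ∈ ℤ/bℤ be such that the cylinder set C := {h ∈ H : h_b = r_b for all b ∈ ℬ'} is nonempty. Then m_H(C) = 1/lcm(ℬ'). -/
open Filter Set Topology MeasureTheory

open scoped Classical

noncomputable section

/-!
A nonempty cylinder over `B'` is a coset of the open subgroup `K ≤ H` of points vanishing at the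
coordinates in `B'`, so its measure is the inverse of the index of `K`. As `Δ(ℤ)` is dense in `H`
and `K` is open, this is also the index in `ℤ` of `Δ⁻¹(K) = ⋂_{b ∈ B'} bℤ = lcm(B') ℤ`.
-/

section General

variable {G : Type*} [Group G]

@[to_additive]
theorem subgroup_index_comap_of_denseRange {G' : Type*} [Group G'] [TopologicalSpace G]
    [SeparatelyContinuousMul G] {f : G' →* G} (hf : DenseRange f) {K : Subgroup G}
    (hK : IsOpen (K : Set G)) : (K.comap f).index = K.index := by
  have : DiscreteTopology (G ⧸ K) := QuotientGroup.discreteTopology hK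
  have hsurj : Function.Surjective fun x => (f x : G ⧸ K) := denseRange_discrete.mp <|
    QuotientGroup.mk_surjective.denseRange.comp hf QuotientGroup.continuous_mk
  have hker : QuotientGroup.leftRel (K.comap f) = Setoid.ker fun x => (f x : G ⧸ K) := by
    ext x y
    simp [QuotientGroup.leftRel_apply, Setoid.ker_def, QuotientGroup.eq]
  calc (K.comap f).index
    _ = Nat.card (Quotient (Setoid.ker fun x => (f x : G ⧸ K))) :=
      Nat.card_congr (Quotient.congrRight fun x y => by rw [hker])
    _ = K.index := Nat.card_congr (Setoid.quotientKerEquivOfSurjective _ hsurj)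

open scoped Pointwise in
@[to_additive]
theorem measure_subgroup_coset [MeasurableSpace G] [MeasurableMul G] (μ : Measure G)
    [μ.IsMulLeftInvariant] [IsProbabilityMeasure μ] {K : Subgroup G} [K.FiniteIndex]
    (hK : MeasurableSet (K : Set G)) (g : G) : μ (g • (K : Set G)) = (K.index : ENNReal)⁻¹ := by
  rw [measure_smul]
  apply ENNReal.eq_inv_of_mul_eq_one_left
  rw [mul_comm, K.index_mul_measure hK μ, measure_univ]

end General

section Cylinder

/-- The diagonal embedding `Δ`, corestricted to `H`. -/
def diagHom (B : Set ℕ) : ℤ →+ Hgrp B :=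
  (diagEmb B).codRestrict (Hgrp B) fun n => AddSubgroup.le_topologicalClosure _ ⟨n, rfl⟩

variable (B : Set ℕ)

@[simp]
theorem diagHom_apply (n : ℤ) (b : B) : (diagHom B n : (b : B) → ZMod b) b = n :=
  rfl

theorem denseRange_diagHom : DenseRange (diagHom B) := by
  have h := (denseRange_inclusion_iff (subset_closure (s := range (diagEmb B)))).mpr subset_rfl
  exact h.comp rangeFactorization_surjective.denseRange (continuous_inclusion _)

/-- The cylinder through `0` in `H` determined by the coordinates in `S`, as a subgroup. The other
nonempty cylinders over `S` are its cosets. Elements of `S` outside `B` impose no condition. -/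
def cylinderSubgroup (B S : Set ℕ) : AddSubgroup (Hgrp B) where
  carrier := {h | ∀ b : B, (b : ℕ) ∈ S → (h : (b : B) → ZMod b) b = 0}
  zero_mem' _ _ := rfl
  add_mem' hx hy b hb := by simp [hx b hb, hy b hb]
  neg_mem' hx b hb := by simp [hx b hb]

variable {B}

@[simp]
theorem mem_cylinderSubgroup {S : Set ℕ} {h : Hgrp B} :
    h ∈ cylinderSubgroup B S ↔ ∀ b : B, (b : ℕ) ∈ S → (h : (b : B) → ZMod b) b = 0 :=
  Iff.rfl

open scoped Pointwise in
theorem setOf_eq_vadd_cylinderSubgroup {S : Set ℕ} {r : (b : ℕ) → ZMod b} {g : Hgrp B}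
    (hg : ∀ b : B, (b : ℕ) ∈ S → (g : (b : B) → ZMod b) b = r b) :
    {h : Hgrp B | ∀ b : B, (b : ℕ) ∈ S → (h : (b : B) → ZMod b) b = r b} =
      g +ᵥ (cylinderSubgroup B S : Set (Hgrp B)) := by
  ext h
  rw [mem_vadd_set_iff_neg_vadd_mem, SetLike.mem_coe, mem_cylinderSubgroup]
  refine forall₂_congr fun b hb => ?_
  simp [← hg b hb, neg_add_eq_zero, eq_comm (a := (g : (b : B) → ZMod b) b)]

theorem comap_diagHom_cylinderSubgroup {B' : Finset ℕ} (hB' : ↑B' ⊆ B) :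
    (cylinderSubgroup B B').comap (diagHom B) =
      AddSubgroup.zmultiples ((B'.lcm id : ℕ) : ℤ) := by
  ext n
  calc n ∈ (cylinderSubgroup B B').comap (diagHom B)
    _ ↔ ∀ b : B, (b : ℕ) ∈ B' → (n : ZMod b) = 0 := by simp
    _ ↔ ∀ b ∈ B', (b : ℤ) ∣ n := by
      simp only [ZMod.intCast_zmod_eq_zero_iff_dvd]
      exact ⟨fun h b hb => h ⟨b, hB' hb⟩ hb, fun h b hb => h b hb⟩
    _ ↔ n ∈ AddSubgroup.zmultiples ((B'.lcm id : ℕ) : ℤ) := by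
      simp [Int.mem_zmultiples_iff, Int.natCast_dvd, Finset.lcm_dvd_iff]

theorem isOpen_cylinderSubgroup {S : Set ℕ} (hS : S.Finite) :
    IsOpen (cylinderSubgroup B S : Set (Hgrp B)) := by
  have hfin : {b : B | (b : ℕ) ∈ S}.Finite := hS.preimage Subtype.val_injective.injOn
  have hcoord (b : B) : Continuous fun h : Hgrp B => (h : (b : B) → ZMod b) b :=
    (continuous_apply b).comp continuous_subtype_val
  have hcarrier : (cylinderSubgroup B S : Set (Hgrp B)) =
      ⋂ b ∈ {b : B | (b : ℕ) ∈ S}, {h : Hgrp B | (h : (b : B) → ZMod b) b = 0} := by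
    ext h
    simp
  rw [hcarrier]
  exact hfin.isOpen_biInter fun b _ => (isOpen_discrete {0}).preimage (hcoord b)

theorem index_cylinderSubgroup {B' : Finset ℕ} (hB' : ↑B' ⊆ B) :
    (cylinderSubgroup B B').index = B'.lcm id := by
  rw [← addSubgroup_index_comap_of_denseRange (denseRange_diagHom B)
      (isOpen_cylinderSubgroup B'.finite_toSet),
    comap_diagHom_cylinderSubgroup hB', Int.index_zmultiples, Int.natAbs_natCast]

variable (B) [∀ b : B, NeZero (b : ℕ)]

instance inst_s6 : (mH B).IsAddHaarMeasure :=
  inferInstanceAs (Measure.addHaarMeasure ⊤).IsAddHaarMeasure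

instance inst_s6_2 : IsProbabilityMeasure (mH B) :=
  ⟨Measure.addHaarMeasure_self (K₀ := ⊤)⟩

end Cylinder

/-- Every nonempty cylinder set in `H` determined by finitely many coordinates
`b ∈ B'` has Haar measure `1 / lcm(B')`. -/
theorem haar_cylinder (B : Set ℕ) [∀ b : B, NeZero (b : ℕ)] (B' : Finset ℕ) (hB'B : ↑B' ⊆ B)
    (r : (b : ℕ) → ZMod b)
    (hne : {h : Hgrp B | ∀ b : B, (b : ℕ) ∈ B' → (h : (b : B) → ZMod b) b = r b}.Nonempty) :
    mH B {h : Hgrp B | ∀ b : B, (b : ℕ) ∈ B' → (h : (b : B) → ZMod b) b = r b} =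
      (((B'.lcm id : ℕ) : ENNReal))⁻¹ := by
  obtain ⟨g, hg⟩ := hne
  have hK := isOpen_cylinderSubgroup (B := B) B'.finite_toSet
  have := AddSubgroup.quotient_finite_of_isOpen _ hK
  have : (cylinderSubgroup B B').FiniteIndex := AddSubgroup.finiteIndex_of_finite_quotient
  rw [← index_cylinderSubgroup hB'B,
    ← measure_addSubgroup_coset (mH B) hK.measurableSet g]
  exact congrArg (mH B) (setOf_eq_vadd_cylinderSubgroup hg)
end
end
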